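/- Let G₀ = A₀ *_{C'₀} = ⟨A₀, t | t C'₀ t⁻¹ = ψ(C'₀)⟩ be an HNN extension, and suppose t centralizes C'₀ (so ψ = id on C'₀ and t commutes with C'₀). Then the map defined by φ|_{A₀} = id and φ(t) = t² extends to an injective endomorphism of G₀, and φ(G₀) is a proper subgroup of G₀ isomorphic to G₀. -/

import Mathlib

/-!
If `t` induces the automorphism `φ` of `C`, then `tⁿ` induces `φⁿ`, which gives a homomorphism
between the HNN extensions of `G` over `C` along `φⁿ` and along `φ`. It carries the element spelled
by a word to the element spelled by the word with every letter `t^{±1}` repeated `n` times. For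
`n ≠ 0` this repetition keeps reduced words reduced, because it only creates pairs of adjacent
letters of equal sign, so Britton's lemma shows that the kernel is trivial. All elements of the
image have `t`-exponent sum divisible by `n`, so for `n ≠ 1` the image does not contain `t`.
-/

open HNNExtension HNNExtension.NormalWord

section ReducedWords

variable {G : Type*} [Group G] {A B : Subgroup G}

/-- The word `(tᵘ)ⁿ g` obtained from the syllable `tᵘ g`, where `x = (u, g)`, for `n ≠ 0`.
For `n = 0` the value is `tᵘ g` itself, so that the word is never empty. -/
def stretchSyllable (n : ℕ) (x : ℤˣ × G) : List (ℤˣ × G) :=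
  List.replicate (n - 1) (x.1, 1) ++ [x]

theorem stretchSyllable_ne_nil (n : ℕ) (x : ℤˣ × G) : stretchSyllable n x ≠ [] := by
  simp [stretchSyllable]

theorem fst_eq_of_mem_stretchSyllable {n : ℕ} {x y : ℤˣ × G} (hy : y ∈ stretchSyllable n x) :
    y.1 = x.1 := by
  obtain ⟨-, rfl⟩ | rfl : (_ ∧ y = (x.1, 1)) ∨ y = x := by
    simpa [stretchSyllable] using hy
  all_goals rfl

theorem isChain_flatMap_stretchSyllable (n : ℕ) {l : List (ℤˣ × G)}
    (hl : l.IsChain fun x y => x.2 ∈ toSubgroup A B x.1 → x.1 = y.1) :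
    (l.flatMap (stretchSyllable n)).IsChain
      fun x y => x.2 ∈ toSubgroup A B x.1 → x.1 = y.1 := by
  have hne : [] ∉ l.map (stretchSyllable n) := by simp [stretchSyllable_ne_nil]
  rw [List.flatMap_def, List.isChain_flatten hne]
  constructor
  · simp only [List.forall_mem_map]
    intro x _
    refine List.Pairwise.isChain (List.pairwise_of_forall_mem_list fun y hy z hz _ => ?_)
    rw [fst_eq_of_mem_stretchSyllable hy, fst_eq_of_mem_stretchSyllable hz]
  · rw [List.isChain_map]
    refine hl.imp fun x y hxy z hz w hw hmem => ?_
    obtain rfl : x = z := by simpa [stretchSyllable] using hz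
    rw [fst_eq_of_mem_stretchSyllable (List.mem_of_mem_head? hw)]
    exact hxy hmem

/-- The reduced word obtained by repeating every letter `t^{±1}` of `w` exactly `n` times,
for `n ≠ 0`. -/
def stretchWord (n : ℕ) (w : ReducedWord G A B) : ReducedWord G A B where
  head := w.head
  toList := w.toList.flatMap (stretchSyllable n)
  chain := isChain_flatMap_stretchSyllable n w.chain

theorem toList_eq_nil_of_toList_stretchWord_eq_nil {n : ℕ} {w : ReducedWord G A B}
    (h : (stretchWord n w).toList = []) : w.toList = [] := by
  rw [stretchWord, List.flatMap_eq_nil_iff] at h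
  exact List.eq_nil_iff_forall_not_mem.2 fun x hx => stretchSyllable_ne_nil n x (h x hx)

variable (φ : A ≃* B)

theorem prod_map_stretchSyllable {n : ℕ} (hn : n ≠ 0) (x : ℤˣ × G) :
    ((stretchSyllable n x).map fun y =>
      (t ^ (y.1 : ℤ) * of y.2 : HNNExtension G A B φ)).prod = (t ^ n) ^ (x.1 : ℤ) * of x.2 := by
  obtain ⟨k, rfl⟩ := Nat.exists_eq_succ_of_ne_zero hn
  simp only [stretchSyllable, Nat.succ_eq_add_one, Nat.add_sub_cancel, List.map_append,
    List.map_replicate, map_one, mul_one, List.map_singleton, List.prod_append,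
    List.prod_replicate, List.prod_singleton]
  rw [← mul_assoc, ← pow_succ, ← zpow_natCast, ← zpow_natCast, zpow_comm]

theorem exists_reducedWord_prod_eq (x : HNNExtension G A B φ) :
    ∃ w : ReducedWord G A B, w.prod φ = x := by
  classical
  obtain ⟨d⟩ := TransversalPair.nonempty G A B
  exact ⟨_, (NormalWord.equiv φ d).symm_apply_apply x⟩

end ReducedWords

section ExponentSum

variable {G : Type*} [Group G] {A B : Subgroup G} {φ : A ≃* B}

/-- The sum of the exponents of the stable letter in an element of an HNN extension, written
multiplicatively. -/
def exponentSum : HNNExtension G A B φ →* Multiplicative ℤ :=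
  lift 1 (Multiplicative.ofAdd 1) fun _ => by simp

@[simp]
theorem exponentSum_of (g : G) : exponentSum (of g : HNNExtension G A B φ) = 1 := by
  simp [exponentSum]

@[simp]
theorem exponentSum_t :
    exponentSum (t : HNNExtension G A B φ) = Multiplicative.ofAdd 1 := by
  simp [exponentSum]

end ExponentSum

section StablePow

variable {G : Type*} [Group G] {C : Subgroup G} {φ ψ : MulAut C} {n : ℕ}

theorem t_pow_mul_of (φ : MulAut C) (n : ℕ) (c : C) :
    (t ^ n * of (c : G) : HNNExtension G C C φ) = of ((φ ^ n) c : G) * t ^ n := by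
  induction n with
  | zero => simp
  | succ n ih =>
    rw [pow_succ', mul_assoc, ih, ← mul_assoc, t_mul_of, mul_assoc, pow_succ' φ, MulAut.mul_apply]

/-- The homomorphism that is the identity on `G` and sends the stable letter to its `n`-th power.
It goes from the HNN extension along `φ ^ n` to the one along `φ`; the name `ψ` for `φ ^ n` lets
both be the same group when `φ ^ n = φ`. -/
def stablePow (h : φ ^ n = ψ) : HNNExtension G C C ψ →* HNNExtension G C C φ :=
  lift of (t ^ n) fun c => h ▸ t_pow_mul_of φ n c

@[simp]
theorem stablePow_of (h : φ ^ n = ψ) (g : G) : stablePow h (of g) = of g :=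
  lift_of ..

@[simp]
theorem stablePow_t (h : φ ^ n = ψ) : stablePow h t = t ^ n :=
  lift_t ..

theorem prod_stretchWord (h : φ ^ n = ψ) (hn : n ≠ 0) (w : ReducedWord G C C) :
    (stretchWord n w).prod φ = stablePow h (w.prod ψ) := by
  simp [ReducedWord.prod, stretchWord, List.flatMap_def, List.map_flatten, List.prod_flatten,
    map_list_prod, Function.comp_def, prod_map_stretchSyllable φ hn]

theorem stablePow_injective (h : φ ^ n = ψ) (hn : n ≠ 0) :
    Function.Injective (stablePow h) := by
  rw [injective_iff_map_eq_one]
  intro x hx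
  obtain ⟨w, rfl⟩ := exists_reducedWord_prod_eq ψ x
  have hstretch : (stretchWord n w).toList = [] :=
    ReducedWord.toList_eq_nil_of_mem_of_range φ _ (by simp [prod_stretchWord h hn, hx])
  have hw : w.prod ψ = of w.head := by
    simp [ReducedWord.prod, toList_eq_nil_of_toList_stretchWord_eq_nil hstretch]
  have hhead : w.head = 1 := by
    rw [hw, stablePow_of] at hx
    exact of_injective φ (hx.trans (map_one of).symm)
  rw [hw, hhead, map_one]

theorem exponentSum_stablePow (h : φ ^ n = ψ) (x : HNNExtension G C C ψ) :
    exponentSum (stablePow h x) = exponentSum x ^ n := by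
  suffices exponentSum.comp (stablePow h) = (powMonoidHom n).comp exponentSum from
    DFunLike.congr_fun this x
  ext <;> simp

theorem stablePow_not_surjective (h : φ ^ n = ψ) (hn : n ≠ 1) :
    ¬ Function.Surjective (stablePow h) := by
  intro hsurj
  obtain ⟨x, hx⟩ := hsurj t
  have hsum : exponentSum x ^ n = Multiplicative.ofAdd 1 := by
    rw [← exponentSum_stablePow h, hx, exponentSum_t]
  have hdvd : (n : ℤ) ∣ 1 :=
    ⟨(exponentSum x).toAdd, by simpa using (congrArg Multiplicative.toAdd hsum).symm⟩
  exact hn (by exact_mod_cast Int.eq_one_of_dvd_one (Int.natCast_nonneg n) hdvd)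

end StablePow

theorem stmt_5_general {G : Type*} [Group G] {C : Subgroup G} {φ ψ : MulAut C} {n : ℕ}
    (h : φ ^ n = ψ) (hn : 1 < n) :
    ∃ f : HNNExtension G C C ψ →* HNNExtension G C C φ,
      (∀ a : G, f (of a) = of a) ∧
      f t = t ^ n ∧
      Function.Injective f ∧ ¬ Function.Surjective f ∧
      Nonempty (f.range ≃* HNNExtension G C C ψ) :=
  have hinj := stablePow_injective h (Nat.ne_zero_of_lt hn)
  ⟨stablePow h, stablePow_of h, stablePow_t h, hinj, stablePow_not_surjective h hn.ne',
    ⟨(MonoidHom.ofInjective hinj).symm⟩⟩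

/-- Let `G₀ = A₀*_{C'₀} = ⟨A₀, t | t C'₀ t⁻¹ = C'₀⟩` be the HNN extension in
which the stable letter `t` centralizes `C'₀` (the associated isomorphism is
the identity of `C`).  Then `φ|_{A₀} = id`, `φ(t) = t²` defines an injective,
non-surjective endomorphism of `G₀`; in particular its image is a proper
subgroup of `G₀` isomorphic to `G₀`. -/
theorem stmt_5 {G : Type*} [Group G] (C : Subgroup G) :
    ∃ ψ : HNNExtension G C C (MulEquiv.refl C) →* HNNExtension G C C (MulEquiv.refl C),
      (∀ a : G, ψ (HNNExtension.of a) = HNNExtension.of a) ∧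
      ψ HNNExtension.t = HNNExtension.t ^ 2 ∧
      Function.Injective ψ ∧ ¬ Function.Surjective ψ ∧
      Nonempty (ψ.range ≃* HNNExtension G C C (MulEquiv.refl C)) :=
  stmt_5_general (φ := 1) (one_pow 2) one_lt_two
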